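/- Let G ⊆ UT(n,ℝ) be a real unipotent group and let q : ℝ^d → G be a polynomial map, with nonstandard extension q^♯ : (ℝ*)^d → G^♯. Let β = (β₁,…,β_d) ∈ (ℝ*)^d be a tuple of hyperreals such that β₁ > r for every real number r, and for every i with 1 ≤ i ≤ d−1 and every real polynomial p in i variables, β_{i+1} > p(β₁,…,β_i). If H₀ is a real algebraic subgroup of G and g ∈ G is such that the coset gH₀ is near q^♯(β), then q^♯(β) ∈ g·H₀^♯. -/

import Mathlib

open Pointwise Filter

noncomputable section

/-- Square matrices of size `n` over `R`. -/
abbrev Mat (n : ℕ) (R : Type) : Type := Matrix (Fin n) (Fin n) R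

/-- The set `UT(n,ℝ)` of upper triangular matrices with `1`s on the diagonal. -/
def UTset (n : ℕ) : Set (Mat n ℝ) :=
  {A | (∀ i, A i i = 1) ∧ ∀ i j : Fin n, (j : ℕ) < (i : ℕ) → A i j = 0}

/-- The entries of a matrix, as a point of `ℝ^(n²)`. -/
def matEval {n : ℕ} (A : Mat n ℝ) : Fin n × Fin n → ℝ := fun ij => A ij.1 ij.2

/-- A real unipotent group: a subgroup of `UT(n,ℝ)` which is the common zero set in
`UT(n,ℝ)` of a family of real polynomials in the matrix entries. -/
def IsRealUnipotentGroup (n : ℕ) (G : Set (Mat n ℝ)) : Prop :=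
  (∃ S : Set (MvPolynomial (Fin n × Fin n) ℝ),
      G = {A | A ∈ UTset n ∧ ∀ p ∈ S, MvPolynomial.eval (matEval A) p = 0}) ∧
    (1 : Mat n ℝ) ∈ G ∧ (∀ a ∈ G, ∀ b ∈ G, a * b ∈ G) ∧ ∀ a ∈ G, a⁻¹ ∈ G

/-- A real algebraic subgroup of a real unipotent group `G`. -/
def IsRealAlgSubgroup (n : ℕ) (G H : Set (Mat n ℝ)) : Prop :=
  H ⊆ G ∧ IsRealUnipotentGroup n H

/-- `N` is a normal subgroup-set of `G`. -/
def IsNormalIn (n : ℕ) (G N : Set (Mat n ℝ)) : Prop :=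
  ∀ g ∈ G, ∀ x ∈ N, g * x * g⁻¹ ∈ N

/-- `Γ` is a lattice in `G`: a discrete subgroup which is cocompact, i.e. there is a
compact `K ⊆ G` with `K·Γ = G` (equivalently, `G/Γ` is compact). -/
def IsLatticeIn (n : ℕ) (G Γ : Set (Mat n ℝ)) : Prop :=
  Γ ⊆ G ∧ (1 : Mat n ℝ) ∈ Γ ∧ (∀ a ∈ Γ, ∀ b ∈ Γ, a * b ∈ Γ) ∧ (∀ a ∈ Γ, a⁻¹ ∈ Γ) ∧
    DiscreteTopology ↥Γ ∧
    ∃ K : Set (Mat n ℝ), K ⊆ G ∧ IsCompact K ∧ ∀ g ∈ G, ∃ k ∈ K, ∃ γ ∈ Γ, g = k * γ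

/-- `H` is `Γ`-rational: `Γ ∩ H` is a lattice in `H`. -/
def IsRationalFor (n : ℕ) (Γ H : Set (Mat n ℝ)) : Prop :=
  IsLatticeIn n H (Γ ∩ H)

/-- The hyperreal matrix represented by a sequence of real matrices. -/
def matOfSeq (n : ℕ) (u : ℕ → Mat n ℝ) : Mat n Hyperreal :=
  Matrix.of fun i j => Hyperreal.ofSeq fun k => u k i j

/-- The nonstandard extension `S^♯` of a set `S` of real matrices: hyperreal matrices
represented by sequences landing in `S` on a set of indices in the ultrafilter. -/
def matSharp (n : ℕ) (S : Set (Mat n ℝ)) : Set (Mat n Hyperreal) :=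
  {A | ∃ u : ℕ → Mat n ℝ, (∀ᶠ k in hyperfilter ℕ, u k ∈ S) ∧ A = matOfSeq n u}

/-- The canonical embedding of real matrices into hyperreal matrices. -/
def matCast {n : ℕ} (A : Mat n ℝ) : Mat n Hyperreal :=
  Matrix.of fun i j => (A i j : Hyperreal)

/-- `μ(G)`: elements of `G^♯` all of whose entries are infinitesimally close to the
corresponding entries of the identity matrix. -/
def muSet (n : ℕ) (G : Set (Mat n ℝ)) : Set (Mat n Hyperreal) :=
  {A | A ∈ matSharp n G ∧ ∀ i j, Hyperreal.Infinitesimal (A i j - (1 : Mat n Hyperreal) i j)}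

/-- The coset `gH` is near `α`, i.e. `α ∈ μ(G)·g·H^♯`. -/
def NearCoset (n : ℕ) (G : Set (Mat n ℝ)) (g : Mat n ℝ) (H : Set (Mat n ℝ))
    (α : Mat n Hyperreal) : Prop :=
  α ∈ muSet n G * ({matCast g} * matSharp n H)

/-- The set of standard parts of the finite elements of a set of hyperreal matrices. -/
def matStSet (n : ℕ) (A : Set (Mat n Hyperreal)) : Set (Mat n ℝ) :=
  {B | ∃ a ∈ A, ∀ i j, Hyperreal.IsSt (a i j) (B i j)}

/-- A polynomial map `ℝ^d → Mat n ℝ`. -/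
def IsPolyMapVec (d n : ℕ) (F : (Fin d → ℝ) → Mat n ℝ) : Prop :=
  ∃ P : Fin n → Fin n → MvPolynomial (Fin d) ℝ,
    ∀ x i j, F x i j = MvPolynomial.eval x (P i j)

/-- The inclusion `ℝ →+* ℝ*` as a ring homomorphism. -/
def realHyperRingHom : ℝ →+* Hyperreal where
  toFun r := (r : Hyperreal)
  map_one' := Hyperreal.coe_one
  map_mul' := Hyperreal.coe_mul
  map_zero' := Hyperreal.coe_zero
  map_add' := Hyperreal.coe_add

/-- A semialgebraic subset of matrix space: a finite union of sets defined by finitely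
many polynomial equations and finitely many strict polynomial inequalities. -/
def IsSemialgebraic (n : ℕ) (S : Set (Mat n ℝ)) : Prop :=
  ∃ (k : ℕ) (P Q : Fin k → Finset (MvPolynomial (Fin n × Fin n) ℝ)),
    S = ⋃ t : Fin k, {A | (∀ p ∈ P t, MvPolynomial.eval (matEval A) p = 0) ∧
      ∀ q ∈ Q t, 0 < MvPolynomial.eval (matEval A) q}

/-! Put `Q = g⁻¹ q`, so that `Q(β)` is infinitely close to `1` modulo `H₀` on the right. If a
polynomial `φ` in the matrix entries is invariant under right translation by `H₀`, then `φ(Q(β))`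
is infinitely close to `φ(1)`. A polynomial taking a finite value at a fast growing tuple is
constant, being dominated by the highest power of the last variable occurring in it; hence
`φ ∘ Q` is the constant `φ(1)`.

It remains to see that the right invariant polynomials determine `H₀`. Let `(f i)` be a basis of the
polynomials of degree at most `D` vanishing on `H₀`. Replacing `x` by `x h` with `h ∈ H₀` multiplies
every determinant `det (f i (z l * x))` by a scalar `c(h)` independent of the matrices `z l`. As `h`
is unipotent, `c(h) ^ k = c(h ^ k)` is polynomial in `k`, which forces `c(h) = 1`. So these
determinants are right invariant, and by Cramer's rule those with some `z l = 1` detect whether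
all `f i` vanish at `x`. -/

open MvPolynomial Topology

section Growth

theorem lt_abs_eval₂_of_degree_pos {R L : Type*} [CommRing R] [Field L] [LinearOrder L]
    [IsStrictOrderedRing L] {φ : R →+* L} {t : L} (ht : ∀ a ≠ 0, ∀ b, φ b < |φ a| * t)
    {p : Polynomial R} (hp : 0 < p.degree) (b : R) : φ b < |p.eval₂ φ t| := by
  have := φ.domain_nontrivial
  have ht' (b : R) : φ b < t := by simpa using ht 1 one_ne_zero b
  have ht0 : 0 < t := by simpa using ht' 0
  refine Polynomial.degree_pos_induction_on (P := fun p => ∀ b, φ b < |p.eval₂ φ t|) p hp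
    (fun ha b => ?_) (fun {p} _ ih b => ?_) (fun {p a} _ ih b => ?_) b
  · simpa [abs_mul, abs_of_pos ht0] using ht _ ha b
  · have h1 : 1 ≤ |p.eval₂ φ t| := by simpa using (ih 1).le
    rw [Polynomial.eval₂_mul_X, abs_mul, abs_of_pos ht0]
    exact (ht' b).trans_le (le_mul_of_one_le_left ht0.le h1)
  · have h1 : φ b + |φ a| < |p.eval₂ φ t| := by
      rcases abs_choice (φ a) with h | h <;> rw [h]
      · simpa using ih (b + a)
      · simpa using ih (b + -a)
    have h2 := abs_sub_abs_le_abs_add (p.eval₂ φ t) (φ a)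
    rw [Polynomial.eval₂_add, Polynomial.eval₂_C]
    linarith

theorem eval₂_optionEquivLeft {σ k L : Type*} [CommSemiring k] [CommSemiring L] (f : k →+* L)
    (β : Option σ → L) (p : MvPolynomial (Option σ) k) :
    (optionEquivLeft k σ p).eval₂ (eval₂Hom f (β ∘ some)) (β none) = eval₂ f β p := by
  induction p using MvPolynomial.induction_on with
  | C a => simp
  | add p q hp hq => simp [hp, hq, Polynomial.eval₂_add]
  | mul_X p i hp => cases i <;> simp [hp, Polynomial.eval₂_mul]

theorem eval₂_optionEquivLeft_rename {k L : Type*} [CommSemiring k] [CommSemiring L]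
    (f : k →+* L) {d : ℕ} (β : Fin (d + 1) → L) (p : MvPolynomial (Fin (d + 1)) k) :
    (optionEquivLeft k (Fin d) (rename finSuccEquivLast p)).eval₂
      (eval₂Hom f (β ∘ Fin.castSucc)) (β (Fin.last d)) = eval₂ f β p := by
  have hβ : (β ∘ finSuccEquivLast.symm) ∘ finSuccEquivLast = β := by ext; simp
  have := eval₂_optionEquivLeft f (β ∘ finSuccEquivLast.symm) (rename finSuccEquivLast p)
  rw [eval₂_rename, hβ] at this
  rw [← this]
  simp [Function.comp_def]

/-- A tuple `β` grows fast over the image of `k` under `f` if each `β i` exceeds every polynomial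
with coefficients in `k` in the earlier coordinates. Constant polynomials are allowed, so the
first coordinate exceeds the whole of `k`. -/
def IsFastGrowing {σ k L : Type*} [LT σ] [LT L] [CommSemiring k] [CommSemiring L]
    (f : k →+* L) (β : σ → L) : Prop :=
  ∀ (i : σ) (q : MvPolynomial σ k), (∀ j ∈ q.vars, j < i) → eval₂ f β q < β i

theorem IsFastGrowing.comp {σ τ k L : Type*} [Preorder σ] [Preorder τ] [LT L] [CommSemiring k]
    [CommSemiring L] {f : k →+* L} {β : σ → L} (hβ : IsFastGrowing f β) {g : τ → σ}
    (hg : StrictMono g) : IsFastGrowing f (β ∘ g) := by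
  classical
  intro i q hq
  rw [← eval₂_rename]
  refine hβ _ _ fun j hj => ?_
  obtain ⟨j', hj', rfl⟩ := Finset.mem_image.1 (vars_rename g q hj)
  exact hg (hq j' hj')

theorem IsFastGrowing.eval₂_init_lt {k L : Type*} [CommSemiring k] [CommSemiring L] [LT L]
    {f : k →+* L} {d : ℕ} {β : Fin (d + 1) → L} (hβ : IsFastGrowing f β)
    (q : MvPolynomial (Fin d) k) : eval₂ f (β ∘ Fin.castSucc) q < β (Fin.last d) := by
  rw [← eval₂_rename]
  refine hβ _ _ fun j hj => ?_
  obtain ⟨j', -, rfl⟩ := Finset.mem_image.1 (vars_rename Fin.castSucc q hj)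
  exact Fin.castSucc_lt_last j'

variable {k L : Type*} [Field k] [Field L] [LinearOrder L] [IsStrictOrderedRing L] {f : k →+* L}

theorem eval₂_lt_abs_mul {σ : Type*} {γ : σ → L} {t : L} (ht : ∀ q, eval₂ f γ q < t) {c : k}
    (hc : c ≠ 0) (q : MvPolynomial σ k) : eval₂ f γ q < |f c| * t := by
  have hfc : 0 < |f c| := by simpa using hc
  rw [← inv_mul_lt_iff₀ hfc, ← abs_inv, ← map_inv₀]
  rcases abs_choice (f c⁻¹) with h | h <;> rw [h]
  · have := ht (C c⁻¹ * q)
    rwa [eval₂_mul, eval₂_C] at this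
  · have := ht (C (-c⁻¹) * q)
    rwa [eval₂_mul, eval₂_C, map_neg] at this

theorem IsFastGrowing.lt_abs_eval₂ {d : ℕ} {β : Fin d → L} (hβ : IsFastGrowing f β)
    {p : MvPolynomial (Fin d) k} (hp : p ∉ Set.range C) (r : k) : f r < |eval₂ f β p| := by
  induction d generalizing r with
  | zero => exact absurd ⟨_, (eq_C_of_isEmpty p).symm⟩ hp
  | succ d ih =>
    set γ := β ∘ Fin.castSucc
    have hγ : IsFastGrowing f γ := hβ.comp Fin.strictMono_castSucc
    have hdom : ∀ a ≠ 0, ∀ q, eval₂Hom f γ q < |eval₂Hom f γ a| * β (Fin.last d) := by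
      intro a ha q
      by_cases hc : a ∈ Set.range C
      · obtain ⟨c, rfl⟩ := hc
        rw [coe_eval₂Hom, eval₂_C]
        exact eval₂_lt_abs_mul hβ.eval₂_init_lt (by simpa using ha) q
      · have h1 : 1 < |eval₂ f γ a| := by simpa using ih hγ hc 1
        have hpos : 0 < β (Fin.last d) := by simpa using hβ.eval₂_init_lt 0
        exact (hβ.eval₂_init_lt q).trans (lt_mul_of_one_lt_left hpos h1)
    let e := (renameEquiv k (finSuccEquivLast (n := d))).trans (optionEquivLeft k (Fin d))
    have heval : eval₂ f β p = (e p).eval₂ (eval₂Hom f γ) (β (Fin.last d)) :=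
      (eval₂_optionEquivLeft_rename f β p).symm
    rw [heval]
    rcases lt_or_ge 0 (e p).degree with hdeg | hdeg
    · simpa using lt_abs_eval₂_of_degree_pos hdom hdeg (C r)
    · have hq := Polynomial.eq_C_of_degree_le_zero hdeg
      rw [hq, Polynomial.eval₂_C]
      refine ih hγ (fun ⟨c, hc⟩ => hp ⟨c, e.injective ?_⟩) r
      rw [hq, ← hc]
      simp [e]

end Growth

section Unipotent

theorem exists_det_ne_zero_of_linearIndependent {K X κ : Type*} [Field K] [Fintype κ]
    [DecidableEq κ] {f : κ → X → K} (hf : LinearIndependent K f) :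
    ∃ y : κ → X, (Matrix.of fun i l => f i (y l)).det ≠ 0 := by
  obtain ⟨κ', a, -, hspan, hli⟩ := exists_linearIndependent' K (flip f)
  rw [span_flip_eq_top_iff_linearIndependent.2 hf] at hspan
  let B := Module.Basis.mk hli hspan.ge
  let e := (Pi.basisFun K κ).indexEquiv B
  refine ⟨a ∘ e, ?_⟩
  have hcol : LinearIndependent K (Matrix.of fun i l => f i ((a ∘ e) l)).col :=
    hli.comp e e.injective
  rw [Matrix.linearIndependent_cols_iff_isUnit, Matrix.isUnit_iff_isUnit_det] at hcol
  exact hcol.ne_zero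

variable {m K : Type*} [Fintype m] [DecidableEq m] [Field K]

theorem isNilpotent_of_isStrictUpper [LinearOrder m] {N : Matrix m m K}
    (hN : ∀ i j, j ≤ i → N i j = 0) : IsNilpotent N := by
  have htri : N.IsUpperTriangular := fun i j hij => hN i j hij.le
  have := Matrix.aeval_self_charpoly N
  rw [Matrix.charpoly_of_isUpperTriangular _ htri] at this
  refine ⟨Fintype.card m, ?_⟩
  simpa [hN] using this

theorem exists_eval_natCast_eq_choose [CharZero K] (j : ℕ) :
    ∃ p : Polynomial K, ∀ k : ℕ, p.eval (k : K) = k.choose j := by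
  refine ⟨Polynomial.C (j.factorial : K)⁻¹ * descPochhammer K j, fun k => ?_⟩
  rw [Polynomial.eval_mul, Polynomial.eval_C, descPochhammer_eval_eq_descFactorial,
    Nat.descFactorial_eq_factorial_mul_choose, Nat.cast_mul,
    inv_mul_cancel_left₀ (Nat.cast_ne_zero.2 j.factorial_ne_zero)]

theorem pow_eq_sum_range_choose_nsmul {R : Type*} [Ring R] {x : R} {n : ℕ}
    (hx : (x - 1) ^ n = 0) (k : ℕ) :
    x ^ k = ∑ j ∈ Finset.range n, k.choose j • (x - 1) ^ j := by
  have hk : x ^ k = ∑ j ∈ Finset.range (k + 1), k.choose j • (x - 1) ^ j := by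
    conv_lhs => rw [← sub_add_cancel x 1, (Commute.one_right (x - 1)).add_pow]
    simp only [one_pow, mul_one, nsmul_eq_mul']
  rw [hk, ← Finset.eventually_constant_sum (N := n) (n := max n (k + 1)) ?_ (le_max_left _ _),
    ← Finset.eventually_constant_sum (N := k + 1) (n := max n (k + 1)) ?_ (le_max_right _ _)]
  · intro j hj
    rw [Nat.choose_eq_zero_of_lt hj, zero_smul]
  · intro j hj
    rw [pow_eq_zero_of_le hj hx, smul_zero]

theorem exists_map_eval_natCast_eq_pow [CharZero K] {h : Matrix m m K} (hh : IsNilpotent (h - 1)) :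
    ∃ A : Matrix m m (Polynomial K), ∀ k : ℕ, A.map (Polynomial.eval (k : K)) = h ^ k := by
  obtain ⟨n, hn⟩ := hh
  choose p hp using exists_eval_natCast_eq_choose (K := K)
  refine ⟨.of fun i j => ∑ l ∈ Finset.range n, p l * Polynomial.C (((h - 1) ^ l) i j),
    fun k => ?_⟩
  ext i j
  simp [pow_eq_sum_range_choose_nsmul hn k, ← Nat.cast_smul_eq_nsmul K,
    Polynomial.eval_finsetSum, hp, Matrix.sum_apply]

theorem eq_one_of_eval_natCast_eq_pow_mul [CharZero K] {p : Polynomial K} {a c : K} (ha : a ≠ 0)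
    (h : ∀ k : ℕ, p.eval (k : K) = c ^ k * a) : c = 1 := by
  have hp : p ≠ 0 := by
    rintro rfl
    exact ha (by simpa using (h 0).symm)
  have hcomp : p.comp (Polynomial.X + Polynomial.C 1) = Polynomial.C c * p := by
    refine Polynomial.eq_of_infinite_eval_eq _ _
      ((Set.infinite_range_of_injective (Nat.cast_injective (R := K))).mono ?_)
    rintro _ ⟨k, rfl⟩
    have := h (k + 1)
    simp only [Set.mem_ofPred_eq, Polynomial.eval_comp, Polynomial.eval_add, Polynomial.eval_X,
      Polynomial.eval_C, Polynomial.eval_mul, h k]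
    push_cast at this
    rw [this]
    ring
  have hlead := congrArg Polynomial.leadingCoeff hcomp
  rw [Polynomial.leadingCoeff_comp (by simp [-map_one]),
    Polynomial.leadingCoeff_X_add_C, one_pow, mul_one, Polynomial.leadingCoeff_mul,
    Polynomial.leadingCoeff_C] at hlead
  exact (mul_eq_right₀ (Polynomial.leadingCoeff_ne_zero.2 hp)).1 hlead.symm

end Unipotent

section Translates

variable {m K R S : Type*} [Field K] [CommRing R] [Algebra K R] [CommRing S] [Algebra K S]

/-- Evaluation of polynomials in the entries of a matrix at a matrix over a `K`-algebra. -/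
def matrixAeval (K : Type*) [Field K] [Algebra K R] (x : Matrix m m R) :
    MvPolynomial (m × m) K →ₐ[K] R :=
  aeval fun p => x p.1 p.2

theorem map_matrixAeval (ψ : R →ₐ[K] S) (x : Matrix m m R) (p : MvPolynomial (m × m) K) :
    ψ (matrixAeval K x p) = matrixAeval K (x.map ψ) p :=
  comp_aeval_apply _ ψ p

theorem map_matrixAeval_mvPolynomialX (x : Matrix m m R) :
    (Matrix.mvPolynomialX m m K).map (matrixAeval K x) = x :=
  Matrix.mvPolynomialX_map_eval₂ (algebraMap K R) x

theorem linearIndependent_matrixAeval [Infinite K] {κ : Type*} {f : κ → MvPolynomial (m × m) K}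
    (hf : LinearIndependent K f) :
    LinearIndependent K fun i (x : Matrix m m K) => matrixAeval K x (f i) := by
  let ev : MvPolynomial (m × m) K →ₗ[K] Matrix m m K → K :=
    LinearMap.pi fun x => (matrixAeval K x).toLinearMap
  refine hf.map' ev (LinearMap.ker_eq_bot.2 fun p q hpq => MvPolynomial.funext fun x => ?_)
  exact congrFun hpq (.of fun i j => x (i, j))

/-- The polynomials of total degree at most `D` in matrix entries which vanish on `V`. -/
def vanishingPolys (V : Set (Matrix m m K)) (D : ℕ) : Submodule K (MvPolynomial (m × m) K) :=
  restrictTotalDegree (m × m) K D ⊓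
    (vanishingIdeal K ((fun x p => x p.1 p.2) '' V)).restrictScalars K

theorem mem_vanishingPolys {V : Set (Matrix m m K)} {D : ℕ} {p : MvPolynomial (m × m) K} :
    p ∈ vanishingPolys V D ↔ p.totalDegree ≤ D ∧ ∀ x ∈ V, matrixAeval K x p = 0 := by
  simp [vanishingPolys, mem_restrictTotalDegree, mem_vanishingIdeal_iff, matrixAeval]

instance [Finite m] (V : Set (Matrix m m K)) (D : ℕ) : FiniteDimensional K (vanishingPolys V D) :=
  Submodule.finiteDimensional_inf_left _ _

theorem totalDegree_aeval_le {σ τ : Type*} {L : σ → MvPolynomial τ K}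
    (hL : ∀ i, (L i).totalDegree ≤ 1) (p : MvPolynomial σ K) :
    (aeval L p).totalDegree ≤ p.totalDegree := by
  rw [aeval_def, eval₂_eq]
  refine totalDegree_finsetSum_le fun e he => ?_
  calc (algebraMap K (MvPolynomial τ K) (p.coeff e) * ∏ i ∈ e.support, L i ^ e i).totalDegree
      ≤ (∏ i ∈ e.support, L i ^ e i).totalDegree := by
        simpa using totalDegree_mul (C (p.coeff e)) (∏ i ∈ e.support, L i ^ e i)
    _ ≤ ∑ i ∈ e.support, (L i ^ e i).totalDegree := totalDegree_finsetProd _ _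
    _ ≤ ∑ i ∈ e.support, e i := Finset.sum_le_sum fun i _ =>
        (totalDegree_pow _ _).trans (mul_le_of_le_one_right' (hL i))
    _ ≤ p.totalDegree := le_totalDegree he

variable [Fintype m]

/-- The action of a matrix `h` on polynomials in matrix entries by right translation:
`(rightTranslate h p)(x) = p(x h)`. -/
def rightTranslate (h : Matrix m m K) : MvPolynomial (m × m) K →ₐ[K] MvPolynomial (m × m) K :=
  matrixAeval K (Matrix.mvPolynomialX m m K * h.map C)

theorem matrixAeval_rightTranslate (x h : Matrix m m K) (p : MvPolynomial (m × m) K) :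
    matrixAeval K x (rightTranslate h p) = matrixAeval K (x * h) p := by
  have hC : (h.map C).map (matrixAeval K x) = h := by
    ext
    simp [matrixAeval]
  rw [rightTranslate, map_matrixAeval, Matrix.map_mul, map_matrixAeval_mvPolynomialX, hC]

theorem totalDegree_rightTranslate_le (h : Matrix m m K) (p : MvPolynomial (m × m) K) :
    (rightTranslate h p).totalDegree ≤ p.totalDegree := by
  refine totalDegree_aeval_le (fun ij => ?_) p
  refine totalDegree_finsetSum_le fun k _ => (totalDegree_mul _ _).trans ?_
  simp

theorem rightTranslate_mem_vanishingPolys [DecidableEq m] {H : Submonoid (Matrix m m K)} {D : ℕ}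
    {h : Matrix m m K} (hh : h ∈ H) {p : MvPolynomial (m × m) K}
    (hp : p ∈ vanishingPolys (H : Set (Matrix m m K)) D) :
    rightTranslate h p ∈ vanishingPolys (H : Set (Matrix m m K)) D := by
  rw [mem_vanishingPolys] at hp ⊢
  refine ⟨(totalDegree_rightTranslate_le h p).trans hp.1, fun x hx => ?_⟩
  rw [matrixAeval_rightTranslate]
  exact hp.2 _ (mul_mem hx hh)

variable {κ : Type*} [Fintype κ] [DecidableEq κ]

/-- The determinant of the values of the polynomials `f i` at the left translates `z l * x`. As a
function of `x` it is a polynomial in the entries of `x`, obtained by taking for `x` the generic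
matrix; this is why `x` is allowed to have entries in a `K`-algebra. -/
def translateDet (f : κ → MvPolynomial (m × m) K) (z : κ → Matrix m m K) (x : Matrix m m R) : R :=
  (Matrix.of fun i l => matrixAeval K ((z l).map (algebraMap K R) * x) (f i)).det

theorem map_translateDet (ψ : R →ₐ[K] S) (f : κ → MvPolynomial (m × m) K) (z : κ → Matrix m m K)
    (x : Matrix m m R) : ψ (translateDet f z x) = translateDet f z (x.map ψ) := by
  rw [translateDet, AlgHom.map_det]
  congr 1
  ext i l
  simp [map_matrixAeval, Matrix.map_mul, Function.comp_def]

theorem matrixAeval_translateDet (f : κ → MvPolynomial (m × m) K) (z : κ → Matrix m m K)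
    (x : Matrix m m R) :
    matrixAeval K x (translateDet f z (Matrix.mvPolynomialX m m K)) = translateDet f z x := by
  rw [map_translateDet, map_matrixAeval_mvPolynomialX]

theorem exists_translateDet_mul {f : κ → MvPolynomial (m × m) K} {h : Matrix m m K}
    (hf : ∀ i, rightTranslate h (f i) ∈ Submodule.span K (Set.range f)) :
    ∃ c : K, ∀ (z : κ → Matrix m m K) (x : Matrix m m K),
      translateDet f z (x * h) = c * translateDet f z x := by
  choose a ha using fun i => Submodule.mem_span_range_iff_exists_fun K |>.1 (hf i)
  refine ⟨(Matrix.of a).det, fun z x => ?_⟩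
  rw [translateDet, translateDet, ← Matrix.det_mul]
  congr 1
  ext i l
  rw [Matrix.of_apply, ← mul_assoc, ← matrixAeval_rightTranslate, ← ha]
  simp [Matrix.mul_apply]

theorem translateDet_mul_of_isNilpotent [DecidableEq m] [CharZero K]
    {f : κ → MvPolynomial (m × m) K} (hli : LinearIndependent K f) {h : Matrix m m K}
    (hh : IsNilpotent (h - 1)) (hf : ∀ i, rightTranslate h (f i) ∈ Submodule.span K (Set.range f))
    (z : κ → Matrix m m K) (x : Matrix m m K) :
    translateDet f z (x * h) = translateDet f z x := by
  obtain ⟨c, hc⟩ := exists_translateDet_mul hf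
  obtain ⟨y, hy⟩ := exists_det_ne_zero_of_linearIndependent (linearIndependent_matrixAeval hli)
  obtain ⟨A, hA⟩ := exists_map_eval_natCast_eq_pow hh
  have hpow (k : ℕ) : translateDet f y (h ^ k) = c ^ k * translateDet f y (1 : Matrix m m K) := by
    induction k with
    | zero => simp
    | succ k ih => rw [pow_succ, hc, ih, pow_succ', mul_assoc]
  have hpoly (k : ℕ) : (translateDet f y A).eval (k : K) = translateDet f y (h ^ k) := by
    rw [← hA]
    exact map_translateDet (Polynomial.aeval (k : K)) f y A
  have hy' : translateDet f y (1 : Matrix m m K) ≠ 0 := by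
    simpa [translateDet] using hy
  have hc1 : c = 1 := eq_one_of_eval_natCast_eq_pow_mul hy' fun k => (hpoly k).trans (hpow k)
  rw [hc, hc1, one_mul]

theorem translateDet_update (f : κ → MvPolynomial (m × m) K) (z : κ → Matrix m m K) (l : κ)
    (y x : Matrix m m K) : translateDet f (Function.update z l y) x =
      Matrix.cramer (.of fun i j => matrixAeval K (z j * x) (f i))
        (fun i => matrixAeval K (y * x) (f i)) l := by
  rw [Matrix.cramer_apply, translateDet]
  congr 1
  ext i j
  obtain rfl | hj := eq_or_ne j l <;> simp [*]

theorem matrixAeval_eq_zero_of_translateDet_eq [DecidableEq m] [Infinite K]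
    {f : κ → MvPolynomial (m × m) K} (hli : LinearIndependent K f)
    (hf : ∀ i, matrixAeval K (1 : Matrix m m K) (f i) = 0) {x : Matrix m m K}
    (hx : ∀ z, translateDet f z x = translateDet f z (1 : Matrix m m K)) (i : κ) :
    matrixAeval K x (f i) = 0 := by
  obtain ⟨y, hy⟩ := exists_det_ne_zero_of_linearIndependent (linearIndependent_matrixAeval hli)
  let B (x : Matrix m m K) : Matrix κ κ K := .of fun i l => matrixAeval K (y l * x) (f i)
  let v (x : Matrix m m K) (i : κ) : K := matrixAeval K x (f i)
  have hdet : (B x).det ≠ 0 := by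
    have : (B x).det = (B 1).det := by simpa [translateDet, B] using hx y
    simpa [this, B] using hy
  have hcramer : (B x).cramer (v x) = 0 := by
    ext l
    have h := hx (Function.update y l 1)
    rw [translateDet_update, translateDet_update, one_mul, one_mul] at h
    have hv1 : v 1 = 0 := funext hf
    simpa [B, v, hv1] using h.trans (congrFun (congrArg (B 1).cramer hv1) l)
  have hv : (B x).det • v x = 0 := by
    rw [← Matrix.mulVec_cramer, hcramer, Matrix.mulVec_zero]
  exact congrFun ((smul_eq_zero_iff_right hdet).1 hv) i

/-- A polynomial in matrix entries is right invariant under `H` if it is constant on the cosets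
`y H`. -/
def IsRightInvariant (H : Set (Matrix m m K)) (φ : MvPolynomial (m × m) K) : Prop :=
  ∀ y, ∀ h ∈ H, matrixAeval K (y * h) φ = matrixAeval K y φ

theorem matrixAeval_eq_zero_of_forall_isRightInvariant [DecidableEq m] [CharZero K]
    {H : Submonoid (Matrix m m K)} (hH : ∀ h ∈ H, IsNilpotent (h - 1)) {x : Matrix m m K}
    (hx : ∀ φ, IsRightInvariant (H : Set (Matrix m m K)) φ →
      matrixAeval K x φ = matrixAeval K (1 : Matrix m m K) φ)
    {p : MvPolynomial (m × m) K} (hp : ∀ h ∈ H, matrixAeval K h p = 0) :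
    matrixAeval K x p = 0 := by
  let W := vanishingPolys (H : Set (Matrix m m K)) p.totalDegree
  let b := Module.finBasis K W
  let f i : MvPolynomial (m × m) K := b i
  have hli : LinearIndependent K f := b.linearIndependent.map' W.subtype W.ker_subtype
  have hspan : Submodule.span K (Set.range f) = W := by
    have := congrArg (Submodule.map W.subtype) b.span_eq
    rwa [Submodule.map_span, ← Set.range_comp, Submodule.map_subtype_top] at this
  have hinv (z) : IsRightInvariant (H : Set (Matrix m m K))
      (translateDet f z (Matrix.mvPolynomialX m m K)) := fun y h hh => by
    simp only [matrixAeval_translateDet]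
    refine translateDet_mul_of_isNilpotent hli (hH h hh) (fun i => ?_) z y
    rw [hspan]
    exact rightTranslate_mem_vanishingPolys hh (b i).2
  have hzero : ∀ i, matrixAeval K x (f i) = 0 :=
    matrixAeval_eq_zero_of_translateDet_eq hli
      (fun i => (mem_vanishingPolys.1 (b i).2).2 1 H.one_mem) fun z => by
        simpa only [matrixAeval_translateDet] using hx _ (hinv z)
  have hpW : p ∈ Submodule.span K (Set.range f) :=
    hspan.ge (mem_vanishingPolys.2 ⟨le_rfl, hp⟩)
  exact (Submodule.span_le (p := LinearMap.ker (matrixAeval K x).toLinearMap)).2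
    (Set.range_subset_iff.2 hzero) hpW

end Translates

section Limits

variable {m σ ι : Type*}

theorem continuous_matrixAeval (p : MvPolynomial (m × m) ℝ) :
    Continuous fun x : Matrix m m ℝ => matrixAeval ℝ x p :=
  (continuous_eval p).comp (f := fun (x : Matrix m m ℝ) (ij : m × m) => x ij.1 ij.2) (by fun_prop)

theorem matrixAeval_map_eval (x : σ → ℝ) (Q : Matrix m m (MvPolynomial σ ℝ))
    (p : MvPolynomial (m × m) ℝ) :
    matrixAeval ℝ (Q.map (eval x)) p = eval x (matrixAeval ℝ Q p) :=
  (map_matrixAeval (aeval x) Q p).symm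

theorem matrixAeval_map_eval_eq_zero [Fintype m] [DecidableEq m] {l : Filter ι} {b : ι → σ → ℝ}
    (hb : ∀ p c, Tendsto (fun k => eval (b k) p) l (𝓝 c) → p = C c)
    {H : Submonoid (Matrix m m ℝ)} (hH : ∀ h ∈ H, IsNilpotent (h - 1))
    {Q : Matrix m m (MvPolynomial σ ℝ)} {e h : ι → Matrix m m ℝ} (he : Tendsto e l (𝓝 1))
    (hh : ∀ᶠ k in l, h k ∈ H) (hQ : ∀ᶠ k in l, Q.map (eval (b k)) = e k * h k)
    {p : MvPolynomial (m × m) ℝ} (hp : ∀ h ∈ H, matrixAeval ℝ h p = 0) (x : σ → ℝ) :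
    matrixAeval ℝ (Q.map (eval x)) p = 0 := by
  refine matrixAeval_eq_zero_of_forall_isRightInvariant hH (fun φ hφ => ?_) hp
  have hlim : Tendsto (fun k => matrixAeval ℝ (e k) φ) l (𝓝 (matrixAeval ℝ 1 φ)) :=
    ((continuous_matrixAeval φ).tendsto 1).comp he
  have hconst : matrixAeval ℝ Q φ = C (matrixAeval ℝ 1 φ) := by
    refine hb _ _ (hlim.congr' ?_)
    filter_upwards [hh, hQ] with k hhk hQk
    rw [← matrixAeval_map_eval, hQk, hφ _ _ hhk]
  rw [matrixAeval_map_eval, hconst, eval_C]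

end Limits

section Hyperreal

theorem eval₂_ofSeq {σ : Type*} (b : ℕ → σ → ℝ) (q : MvPolynomial σ ℝ) :
    eval₂ realHyperRingHom (fun i => Hyperreal.ofSeq fun k => b k i) q =
      Hyperreal.ofSeq fun k => eval (b k) q := by
  induction q using MvPolynomial.induction_on with
  | C a => simp only [eval₂_C, eval_C]; rfl
  | add p q hp hq => rw [eval₂_add, hp, hq]; simp only [map_add]; rfl
  | mul_X p i hp => rw [eval₂_mul, hp, eval₂_X]; simp only [map_mul, eval_X]; rfl

theorem IsFastGrowing.eq_C_of_tendsto {d : ℕ} {b : ℕ → Fin d → ℝ}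
    (hb : IsFastGrowing realHyperRingHom fun i => Hyperreal.ofSeq fun k => b k i)
    {p : MvPolynomial (Fin d) ℝ} {c : ℝ}
    (hp : Tendsto (fun k => eval (b k) p) (hyperfilter ℕ) (𝓝 c)) : p = C c := by
  obtain ⟨a, rfl⟩ : p ∈ Set.range C := by
    by_contra hC
    have hlt : ∀ᶠ k in hyperfilter ℕ, |c| + 1 < |eval (b k) p| := by
      have := hb.lt_abs_eval₂ hC (|c| + 1)
      rw [eval₂_ofSeq] at this
      exact Hyperreal.ofSeq_lt_ofSeq.1 this
    obtain ⟨k, hk, hk'⟩ := (hlt.and (hp.abs.eventually_lt_const (lt_add_one |c|))).exists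
    exact lt_asymm hk hk'
  simp only [eval_C] at hp
  rw [tendsto_nhds_unique tendsto_const_nhds hp]

variable {n : ℕ}

theorem matOfSeq_mul (u v : ℕ → Mat n ℝ) :
    matOfSeq n u * matOfSeq n v = matOfSeq n fun k => u k * v k := by
  ext i j
  have := map_sum (Germ.coeRingHom (hyperfilter ℕ : Filter ℕ))
    (fun l k => u k i l * v k l j) Finset.univ
  rw [Finset.sum_fn] at this
  exact this.symm

theorem matOfSeq_eq_matOfSeq_iff {u v : ℕ → Mat n ℝ} :
    matOfSeq n u = matOfSeq n v ↔ ∀ᶠ k in hyperfilter ℕ, u k = v k := by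
  simp only [← Matrix.ext_iff, eventually_all]
  exact forall₂_congr fun i j => Germ.coe_eq

theorem matOfSeq_const (g : Mat n ℝ) : matOfSeq n (fun _ => g) = matCast g := rfl

theorem eval₂_eq_matOfSeq {d : ℕ} (P : Matrix (Fin n) (Fin n) (MvPolynomial (Fin d) ℝ))
    (b : ℕ → Fin d → ℝ) :
    (Matrix.of fun i j =>
        eval₂ realHyperRingHom (fun i => Hyperreal.ofSeq fun k => b k i) (P i j)) =
      matOfSeq n fun k => P.map (eval (b k)) := by
  ext i j
  exact eval₂_ofSeq b (P i j)

theorem tendsto_one_of_matOfSeq_mem_muSet {G : Set (Mat n ℝ)} {u : ℕ → Mat n ℝ}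
    (hu : matOfSeq n u ∈ muSet n G) : Tendsto u (hyperfilter ℕ) (𝓝 1) := by
  refine tendsto_pi_nhds.2 fun i => tendsto_pi_nhds.2 fun j => ?_
  have hone : ((1 : Mat n ℝ) i j : Hyperreal) = (1 : Mat n Hyperreal) i j := by
    rw [Matrix.one_apply, Matrix.one_apply]
    split_ifs <;> simp
  have hsub (δ : ℝ) (hδ : 0 < δ) := hu.2 i j δ hδ
  rw [← hone] at hsub
  rw [← Hyperreal.tendsto_ofSeq, Hyperreal.tendsto_iff_forall]
  refine ⟨fun s hs => ?_, fun s hs => ?_⟩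
  · have := (hsub _ (sub_pos.2 hs)).1
    change (s : Hyperreal) ≤ matOfSeq n u i j
    push_cast at this
    linarith
  · have := (hsub _ (sub_pos.2 hs)).2
    change matOfSeq n u i j ≤ (s : Hyperreal)
    push_cast at this
    linarith

theorem exists_eventually_eq_mul_of_nearCoset {G H : Set (Mat n ℝ)} {g : Mat n ℝ} {w : ℕ → Mat n ℝ}
    (hw : NearCoset n G g H (matOfSeq n w)) :
    ∃ e h : ℕ → Mat n ℝ, Tendsto e (hyperfilter ℕ) (𝓝 1) ∧ (∀ᶠ k in hyperfilter ℕ, h k ∈ H) ∧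
      ∀ᶠ k in hyperfilter ℕ, w k = e k * (g * h k) := by
  obtain ⟨e', he', _, ⟨_, rfl, h', ⟨h, hh, rfl⟩, rfl⟩, heq⟩ := hw
  obtain ⟨e, -, rfl⟩ := he'.1
  refine ⟨e, h, tendsto_one_of_matOfSeq_mem_muSet he', hh, matOfSeq_eq_matOfSeq_iff.1 ?_⟩
  rw [← heq, ← matOfSeq_mul, ← matOfSeq_mul, matOfSeq_const]

end Hyperreal

section RealUnipotent

variable {n : ℕ}

theorem isNilpotent_sub_one_of_mem_UTset {A : Mat n ℝ} (hA : A ∈ UTset n) :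
    IsNilpotent (A - 1) := by
  refine isNilpotent_of_isStrictUpper fun i j hij => ?_
  obtain rfl | hij := hij.eq_or_lt
  · simp [hA.1]
  · simp [hA.2 i j hij, hij.ne']

theorem isUnit_det_of_mem_UTset {A : Mat n ℝ} (hA : A ∈ UTset n) : IsUnit A.det := by
  rw [Matrix.det_of_isUpperTriangular fun i j hij => hA.2 i j hij]
  simp [hA.1]

theorem IsRealUnipotentGroup.subset_UTset {G : Set (Mat n ℝ)} (hG : IsRealUnipotentGroup n G) :
    G ⊆ UTset n := by
  obtain ⟨⟨S, rfl⟩, -⟩ := hG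
  exact fun A hA => hA.1

theorem IsRealUnipotentGroup.mem_of_forall_matrixAeval_eq_zero {H : Set (Mat n ℝ)}
    (hH : IsRealUnipotentGroup n H) {x : Mat n ℝ}
    (hx : ∀ p : MvPolynomial (Fin n × Fin n) ℝ, (∀ h ∈ H, matrixAeval ℝ h p = 0) →
      matrixAeval ℝ x p = 0) : x ∈ H := by
  obtain ⟨⟨S, rfl⟩, -⟩ := hH
  refine ⟨⟨fun i => ?_, fun i j hij => ?_⟩, fun p hp => hx p fun h hh => hh.2 p hp⟩
  · have := hx (X (i, i) - 1) fun h hh => by simp [matrixAeval, hh.1.1]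
    simpa [matrixAeval, sub_eq_zero] using this
  · have := hx (X (i, j)) fun h hh => by simp [matrixAeval, hh.1.2 i j hij]
    simpa [matrixAeval] using this

theorem inv_mul_map_eval_mem_of_nearCoset {d : ℕ} {G H : Set (Mat n ℝ)}
    (hH : IsRealUnipotentGroup n H) {g : Mat n ℝ} (hg : IsUnit g.det)
    {P : Matrix (Fin n) (Fin n) (MvPolynomial (Fin d) ℝ)} {b : ℕ → Fin d → ℝ}
    (hb : IsFastGrowing realHyperRingHom fun i => Hyperreal.ofSeq fun k => b k i)
    (hnear : NearCoset n G g H (matOfSeq n fun k => P.map (eval (b k)))) (x : Fin d → ℝ) :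
    g⁻¹ * P.map (eval x) ∈ H := by
  obtain ⟨e, h, he, hh, heq⟩ := exists_eventually_eq_mul_of_nearCoset hnear
  let H' : Submonoid (Mat n ℝ) := ⟨⟨H, fun {a b} ha hb => hH.2.2.1 a ha b hb⟩, hH.2.1⟩
  have hunip : ∀ a ∈ H', IsNilpotent (a - 1) := fun a ha =>
    isNilpotent_sub_one_of_mem_UTset (hH.subset_UTset ha)
  have hQ (x : Fin d → ℝ) : ((g⁻¹).map C * P).map (eval x) = g⁻¹ * P.map (eval x) := by
    rw [Matrix.map_mul]
    congr 1
    ext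
    simp
  have he' : Tendsto (fun k => g⁻¹ * e k * g) (hyperfilter ℕ) (𝓝 1) := by
    have := (he.const_mul g⁻¹).mul_const g
    rwa [mul_one, Matrix.nonsing_inv_mul _ hg] at this
  refine hH.mem_of_forall_matrixAeval_eq_zero fun p hp => ?_
  rw [← hQ]
  refine matrixAeval_map_eval_eq_zero (fun p c => hb.eq_C_of_tendsto) hunip he' hh ?_ hp x
  filter_upwards [heq] with k hk
  rw [hQ, hk]
  simp only [mul_assoc]

theorem isFastGrowing_of_lt {d : ℕ} {β : Fin d → Hyperreal} (hd : 0 < d)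
    (h1 : ∀ r : ℝ, (r : Hyperreal) < β ⟨0, hd⟩)
    (h2 : ∀ i : Fin d, 1 ≤ (i : ℕ) → ∀ q : MvPolynomial (Fin d) ℝ,
      (∀ j ∈ q.vars, (j : ℕ) < (i : ℕ)) → eval₂ realHyperRingHom β q < β i) :
    IsFastGrowing realHyperRingHom β := by
  intro i q hq
  rcases Nat.eq_zero_or_pos i with hi | hi
  · obtain rfl : i = ⟨0, hd⟩ := Fin.ext hi
    have hvars : q.vars = ∅ := Finset.eq_empty_of_forall_notMem fun j hj =>
      Nat.not_lt_zero _ (hq j hj)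
    rw [vars_eq_empty_iff_eq_C.1 hvars, eval₂_C]
    exact h1 _
  · exact h2 i hi q hq

end RealUnipotent

theorem stmt19_general {n d : ℕ} {G : Set (Mat n ℝ)}
    (P : Matrix (Fin n) (Fin n) (MvPolynomial (Fin d) ℝ)) {β : Fin d → Hyperreal}
    (hβ : IsFastGrowing realHyperRingHom β) {H₀ : Set (Mat n ℝ)}
    (hH₀ : IsRealUnipotentGroup n H₀) {g : Mat n ℝ} (hg : IsUnit g.det)
    (hnear : NearCoset n G g H₀ (Matrix.of fun i j => eval₂ realHyperRingHom β (P i j))) :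
    (Matrix.of fun i j => eval₂ realHyperRingHom β (P i j)) ∈ {matCast g} * matSharp n H₀ := by
  choose s hs using fun i => Hyperreal.ofSeq_surjective (β i)
  obtain rfl : (fun i => Hyperreal.ofSeq (s i)) = β := funext hs
  let b k i := s i k
  rw [eval₂_eq_matOfSeq P b] at hnear ⊢
  have hmem := inv_mul_map_eval_mem_of_nearCoset hH₀ hg (b := b) hβ hnear
  refine ⟨_, rfl, _, ⟨_, .of_forall fun k => hmem (b k), rfl⟩, ?_⟩
  simp only [← matOfSeq_const, matOfSeq_mul]
  simp only [Matrix.mul_nonsing_inv_cancel_left _ _ hg]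

/-- if a coset `gH₀` is near the value of a polynomial map into `G` at a
sufficiently fast growing tuple of hyperreals `β`, then `q^♯(β) ∈ g·H₀^♯`. -/
theorem stmt19 {n d : ℕ} (G : Set (Mat n ℝ)) (hG : IsRealUnipotentGroup n G)
    (P : Fin n → Fin n → MvPolynomial (Fin d) ℝ)
    (hPG : ∀ x : Fin d → ℝ, (Matrix.of fun i j => MvPolynomial.eval x (P i j)) ∈ G)
    (hd : 0 < d) (β : Fin d → Hyperreal)
    (h1 : ∀ r : ℝ, (r : Hyperreal) < β ⟨0, hd⟩)
    (h2 : ∀ i : Fin d, 1 ≤ (i : ℕ) → ∀ q : MvPolynomial (Fin d) ℝ,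
      (∀ j ∈ q.vars, (j : ℕ) < (i : ℕ)) →
      MvPolynomial.eval₂ realHyperRingHom β q < β i)
    (H₀ : Set (Mat n ℝ)) (hH₀ : IsRealAlgSubgroup n G H₀)
    (g : Mat n ℝ) (hg : g ∈ G)
    (hnear : NearCoset n G g H₀
      (Matrix.of fun i j => MvPolynomial.eval₂ realHyperRingHom β (P i j))) :
    (Matrix.of fun i j => MvPolynomial.eval₂ realHyperRingHom β (P i j)) ∈
      {matCast g} * matSharp n H₀ := by
  exact stmt19_general P (isFastGrowing_of_lt hd h1 h2) hH₀.2
    (isUnit_det_of_mem_UTset (hG.subset_UTset hg)) hnear
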